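/- arXiv:2407.17964 — 3 statements merged into one kernel-verified Lean document; each statement's English description precedes it below -/
import Mathlib

section
/- Let T > 0, κ > 0, and let y : ℝ × ℝ^d → ℝ be twice continuously differentiable such that there is a compact set K ⊂ ℝ^d with y(t,x) = 0 whenever x ∉ K, and y(0,x) = 0 for all x ∈ ℝ^d. Then (1/2) ∫₀^T ∫_{ℝ^d} (∂ₜy − κΔy)² dx dt ≤ ∫₀^T ∫_{ℝ^d} ((∂ₜy)² + κ²(Δy)²) dx dt ≤ ∫₀^T ∫_{ℝ^d} (∂ₜy − κΔy)² dx dt. -/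
open MeasureTheory

/-- Partial derivative with respect to the first (time) variable. -/
noncomputable def timeDeriv {d : ℕ} (y : ℝ × (Fin d → ℝ) → ℝ) (t : ℝ) (x : Fin d → ℝ) : ℝ :=
  deriv (fun s => y (s, x)) t

/-- Partial derivative with respect to the `i`-th spatial variable. -/
noncomputable def spatialPartial {d : ℕ} (i : Fin d) (y : ℝ × (Fin d → ℝ) → ℝ)
    (t : ℝ) (x : Fin d → ℝ) : ℝ :=
  deriv (fun s => y (t, Function.update x i s)) (x i)

/-- The spatial Laplacian `Δy(t,·) = Σ_i ∂²y/∂x_i²`. -/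
noncomputable def spatialLaplacian {d : ℕ} (y : ℝ × (Fin d → ℝ) → ℝ)
    (t : ℝ) (x : Fin d → ℝ) : ℝ :=
  ∑ i : Fin d, spatialPartial i (fun p => spatialPartial i y p.1 p.2) t x

/-!
Expand `(∂ₜy - κΔy)² = (∂ₜy)² + κ²(Δy)² - 2κ ∂ₜy Δy`. By Green's identity the cross term is a time
derivative, `-∫ ∂ₜy Δy dx = d/dt (½ ∫ |∇y|² dx)`, so the space-time integral of the square exceeds
that of the sum of squares by exactly `2κ` times the growth of the Dirichlet energy over `[0, T]`.
This growth is nonnegative because the energy vanishes at `t = 0`. The other bound is the pointwise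
inequality `(a - b)² ≤ 2(a² + b²)`.
-/

section SquareIntegrable

variable {α : Type*} [MeasurableSpace α] {μ : Measure α} {u v : α → ℝ}

lemma integral_sub_mul_sq_eq (c : ℝ) (hu : MemLp u 2 μ) (hv : MemLp v 2 μ) :
    ∫ x, (u x - c * v x) ^ 2 ∂μ =
      (∫ x, (u x ^ 2 + c ^ 2 * v x ^ 2) ∂μ) - 2 * c * ∫ x, u x * v x ∂μ := by
  have hsum : Integrable (fun x => u x ^ 2 + c ^ 2 * v x ^ 2) μ :=
    hu.integrable_sq.add (hv.integrable_sq.const_mul _)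
  have hcross : Integrable (fun x => 2 * c * (u x * v x)) μ := (hu.integrable_mul hv).const_mul _
  rw [← integral_const_mul, ← integral_sub hsum hcross]
  exact integral_congr_ae (.of_forall fun x => by ring)

lemma half_integral_sub_mul_sq_le (c : ℝ) (hu : MemLp u 2 μ) (hv : MemLp v 2 μ) :
    (1 / 2) * ∫ x, (u x - c * v x) ^ 2 ∂μ ≤ ∫ x, (u x ^ 2 + c ^ 2 * v x ^ 2) ∂μ := by
  rw [← integral_const_mul]
  refine integral_mono ((hu.sub (hv.const_mul c)).integrable_sq.const_mul _)
    (hu.integrable_sq.add (hv.integrable_sq.const_mul _)) fun x => ?_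
  linarith [sq_nonneg (u x + c * v x)]

end SquareIntegrable

/-- The function `f` of a parameter `t` (time) and a point `x` (space) vanishes unless `x ∈ K`. For
compact `K` every time slice of a continuous such `f` is integrable, with a single `K` serving all
times. -/
def SpatiallySupportedIn {X E F : Type*} [Zero F] (K : Set E) (f : X × E → F) : Prop :=
  ∀ t, ∀ x ∉ K, f (t, x) = 0

section ParametricIntegral

variable {X E F : Type*} [TopologicalSpace X] [TopologicalSpace E] [MeasurableSpace E]
  [OpensMeasurableSpace E] {μ : Measure E} [IsFiniteMeasureOnCompacts μ] [NormedAddCommGroup F]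
  {K : Set E}

lemma continuous_integral_slice [NormedSpace ℝ F] {f : X × E → F} (hf : Continuous f)
    (hK : IsCompact K) (hfK : SpatiallySupportedIn K f) : Continuous fun t => ∫ x, f (t, x) ∂μ :=
  continuousOn_univ.1 <| continuousOn_integral_of_compact_support (f := fun t x => f (t, x)) hK
    hf.continuousOn fun t x _ hx => hfK t x hx

variable [T2Space E]

lemma integrable_slice {f : X × E → F} (hf : Continuous f) (hK : IsCompact K)
    (hfK : SpatiallySupportedIn K f) (t : X) : Integrable (fun x => f (t, x)) μ :=
  Continuous.integrable_of_hasCompactSupport (by fun_prop) (HasCompactSupport.intro hK (hfK t))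

lemma memLp_slice {f : X × E → F} (hf : Continuous f) (hK : IsCompact K)
    (hfK : SpatiallySupportedIn K f) (p : ENNReal) (t : X) : MemLp (fun x => f (t, x)) p μ :=
  Continuous.memLp_of_hasCompactSupport (by fun_prop) (HasCompactSupport.intro hK (hfK t))

lemma hasDerivAt_integral_slice [NormedSpace ℝ F] {f f' : ℝ × E → F} (hf : Continuous f)
    (hf' : Continuous f') (hderiv : ∀ t x, HasDerivAt (fun s => f (s, x)) (f' (t, x)) t)
    (hK : IsCompact K) (hfK : SpatiallySupportedIn K f) (t : ℝ) :
    HasDerivAt (fun s => ∫ x, f (s, x) ∂μ) (∫ x, f' (t, x) ∂μ) t := by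
  have hf'K : SpatiallySupportedIn K f' := fun s x hx => by
    have hconst : (fun r => f (r, x)) = fun _ => 0 := funext fun r => hfK r x hx
    exact (hconst ▸ hderiv s x).unique (hasDerivAt_const s 0)
  obtain ⟨M, hM⟩ := ((isCompact_closedBall t 1).prod hK).exists_bound_of_continuousOn
    hf'.continuousOn
  refine (hasDerivAt_integral_of_dominated_loc_of_deriv_le (F' := fun s x => f' (s, x))
    (bound := K.indicator fun _ => M) (Metric.closedBall_mem_nhds t one_pos)
    (.of_forall fun s => (integrable_slice hf hK hfK s).aestronglyMeasurable)
    (integrable_slice hf hK hfK t) (integrable_slice hf' hK hf'K t).aestronglyMeasurable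
    (.of_forall fun x s hs => ?_)
    ((integrable_indicator_iff hK.measurableSet).2 (integrableOn_const hK.measure_ne_top))
    (.of_forall fun x s _ => hderiv s x)).2
  by_cases hx : x ∈ K
  · simpa only [Set.indicator_of_mem hx] using hM (s, x) ⟨hs, hx⟩
  · simp [Set.indicator_of_notMem hx, hf'K s x hx]

end ParametricIntegral

lemma fderiv_fderiv_apply_comm {E F : Type*} [NormedAddCommGroup E] [NormedSpace ℝ E]
    [NormedAddCommGroup F] [NormedSpace ℝ F] {f : E → F} {p : E} (hf : ContDiffAt ℝ 2 f p)
    (v w : E) :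
    fderiv ℝ (fun q => fderiv ℝ f q v) p w = fderiv ℝ (fun q => fderiv ℝ f q w) p v := by
  have hd : DifferentiableAt ℝ (fderiv ℝ f) p :=
    (hf.fderiv_right (m := 1) (by norm_num)).differentiableAt one_ne_zero
  simpa [fderiv_clm_apply hd] using hf.isSymmSndFDerivAt (by simp) w v

section PartialDerivatives

variable {d : ℕ} {y : ℝ × (Fin d → ℝ) → ℝ} {K : Set (Fin d → ℝ)} {m n : WithTop ℕ∞}

lemma hasDerivAt_timeDeriv {t : ℝ} {x : Fin d → ℝ} (hy : DifferentiableAt ℝ y (t, x)) :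
    HasDerivAt (fun s => y (s, x)) (timeDeriv y t x) t :=
  (hy.comp t (f := fun s => (s, x)) (by fun_prop)).hasDerivAt

lemma timeDeriv_eq_fderiv {t : ℝ} {x : Fin d → ℝ} (hy : DifferentiableAt ℝ y (t, x)) :
    timeDeriv y t x = fderiv ℝ y (t, x) (1, 0) :=
  (hy.hasFDerivAt.comp_hasDerivAt t
    ((hasDerivAt_id t).prodMk (hasDerivAt_const t x))).deriv

lemma spatialPartial_eq_fderiv (i : Fin d) {t : ℝ} {x : Fin d → ℝ}
    (hy : DifferentiableAt ℝ y (t, x)) :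
    spatialPartial i y t x = fderiv ℝ y (t, x) (0, Pi.single i 1) :=
  (hy.hasFDerivAt.comp_hasDerivAt_of_eq (x i)
    ((hasDerivAt_const (x i) t).prodMk (hasDerivAt_update x i (x i)))
    (by rw [Function.update_eq_self])).deriv

lemma contDiff_timeDeriv (hy : ContDiff ℝ n y) (hmn : m + 1 ≤ n) :
    ContDiff ℝ m fun p : ℝ × (Fin d → ℝ) => timeDeriv y p.1 p.2 := by
  have hd : Differentiable ℝ y := hy.differentiable (by rintro rfl; simp at hmn)
  simp only [timeDeriv_eq_fderiv (hd _)]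
  exact (hy.fderiv_right hmn).clm_apply contDiff_const

lemma contDiff_spatialPartial (i : Fin d) (hy : ContDiff ℝ n y) (hmn : m + 1 ≤ n) :
    ContDiff ℝ m fun p : ℝ × (Fin d → ℝ) => spatialPartial i y p.1 p.2 := by
  have hd : Differentiable ℝ y := hy.differentiable (by rintro rfl; simp at hmn)
  simp only [spatialPartial_eq_fderiv i (hd _)]
  exact (hy.fderiv_right hmn).clm_apply contDiff_const

lemma continuous_spatialPartial (i : Fin d) (hy : ContDiff ℝ 1 y) :
    Continuous fun p : ℝ × (Fin d → ℝ) => spatialPartial i y p.1 p.2 :=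
  (contDiff_spatialPartial (m := 0) i hy (by norm_num)).continuous

lemma continuous_spatialLaplacian (hy : ContDiff ℝ 2 y) :
    Continuous fun p : ℝ × (Fin d → ℝ) => spatialLaplacian y p.1 p.2 :=
  continuous_finsetSum _ fun i _ =>
    continuous_spatialPartial i (contDiff_spatialPartial i hy (by norm_num))

lemma timeDeriv_spatialPartial_comm (i : Fin d) (hy : ContDiff ℝ 2 y) (t : ℝ) (x : Fin d → ℝ) :
    timeDeriv (fun p => spatialPartial i y p.1 p.2) t x =
      spatialPartial i (fun p => timeDeriv y p.1 p.2) t x := by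
  have hd : Differentiable ℝ y := hy.differentiable two_ne_zero
  rw [timeDeriv_eq_fderiv
      ((contDiff_spatialPartial (m := 1) i hy (by norm_num)).differentiable one_ne_zero _),
    spatialPartial_eq_fderiv i
      ((contDiff_timeDeriv (m := 1) hy (by norm_num)).differentiable one_ne_zero _)]
  simp only [timeDeriv_eq_fderiv (hd _), spatialPartial_eq_fderiv i (hd _)]
  exact fderiv_fderiv_apply_comm hy.contDiffAt _ _

namespace SpatiallySupportedIn

lemma timeDeriv (hyK : SpatiallySupportedIn K y) :
    SpatiallySupportedIn K fun p => timeDeriv y p.1 p.2 := fun t x hx => by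
  simp [_root_.timeDeriv, hyK _ x hx]

lemma spatialPartial (i : Fin d) (hK : IsClosed K) (hyK : SpatiallySupportedIn K y) :
    SpatiallySupportedIn K fun p => spatialPartial i y p.1 p.2 := fun t x hx => by
  have hupdate : ∀ᶠ s in nhds (x i), Function.update x i s ∈ Kᶜ :=
    (continuous_const.update i continuous_id).continuousAt.eventually_mem
      (hK.isOpen_compl.mem_nhds (by simpa using hx))
  have hzero : (fun s => y (t, Function.update x i s)) =ᶠ[nhds (x i)] fun _ => 0 :=
    hupdate.mono fun s hs => hyK t _ hs
  exact hzero.deriv_eq.trans (deriv_const _ _)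

lemma spatialLaplacian (hK : IsClosed K) (hyK : SpatiallySupportedIn K y) :
    SpatiallySupportedIn K fun p => spatialLaplacian y p.1 p.2 := fun t x hx =>
  Finset.sum_eq_zero fun i _ => (hyK.spatialPartial i hK).spatialPartial i hK t x hx

end SpatiallySupportedIn

end PartialDerivatives

section Energy

variable {d : ℕ} {f g y : ℝ × (Fin d → ℝ) → ℝ} {K : Set (Fin d → ℝ)}

lemma integral_mul_spatialPartial_eq_neg (i : Fin d) (hf : ContDiff ℝ 1 f) (hg : ContDiff ℝ 1 g)
    (hK : IsCompact K) (hgK : SpatiallySupportedIn K g) (t : ℝ) :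
    ∫ x, f (t, x) * spatialPartial i g t x = -∫ x, spatialPartial i f t x * g (t, x) := by
  have hint_left : Integrable fun x => spatialPartial i f t x * g (t, x) :=
    integrable_slice ((continuous_spatialPartial i hf).mul hg.continuous) hK
      (fun s x hx => by simp [hgK s x hx]) t
  have hint_right : Integrable fun x => f (t, x) * spatialPartial i g t x :=
    integrable_slice (hf.continuous.mul (continuous_spatialPartial i hg)) hK
      (fun s x hx => mul_eq_zero_of_right _ (hgK.spatialPartial i hK.isClosed s x hx)) t
  have hint : Integrable fun x => f (t, x) * g (t, x) :=
    integrable_slice (hf.continuous.mul hg.continuous) hK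
      (fun s x hx => by simp [hgK s x hx]) t
  have hfd := hf.differentiable one_ne_zero
  have hgd := hg.differentiable one_ne_zero
  simp only [spatialPartial_eq_fderiv i (hfd _), spatialPartial_eq_fderiv i (hgd _)]
    at hint_left hint_right ⊢
  exact integral_bilinear_hasFDerivAt_right_eq_neg_left_of_integrable
    (B := ContinuousLinearMap.mul ℝ ℝ) hint_left hint_right hint
    (fun x _ => (hfd (t, x)).hasFDerivAt.comp x (hasFDerivAt_prodMk_right t x))
    (fun x _ => (hgd (t, x)).hasFDerivAt.comp x (hasFDerivAt_prodMk_right t x))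

lemma integral_mul_spatialLaplacian_eq_neg (hf : ContDiff ℝ 1 f) (hg : ContDiff ℝ 2 g)
    (hK : IsCompact K) (hgK : SpatiallySupportedIn K g) (t : ℝ) :
    ∫ x, f (t, x) * spatialLaplacian g t x =
      -∫ x, ∑ i, spatialPartial i f t x * spatialPartial i g t x := by
  have hg₁ i := contDiff_spatialPartial (m := 1) i hg (by norm_num)
  have hgK₁ i := hgK.spatialPartial i hK.isClosed
  have hint_left (i : Fin d) : Integrable fun x =>
      f (t, x) * spatialPartial i (fun p => spatialPartial i g p.1 p.2) t x :=
    integrable_slice (hf.continuous.mul (continuous_spatialPartial i (hg₁ i))) hK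
      (fun s x hx => mul_eq_zero_of_right _ ((hgK₁ i).spatialPartial i hK.isClosed s x hx)) t
  have hint_right (i : Fin d) : Integrable fun x =>
      spatialPartial i f t x * spatialPartial i g t x :=
    integrable_slice ((continuous_spatialPartial i hf).mul (hg₁ i).continuous) hK
      (fun s x hx => mul_eq_zero_of_right _ (hgK₁ i s x hx)) t
  simp only [spatialLaplacian, Finset.mul_sum]
  rw [integral_finsetSum _ fun i _ => hint_left i, integral_finsetSum _ fun i _ => hint_right i,
    ← Finset.sum_neg_distrib]
  exact Finset.sum_congr rfl fun i _ =>
    integral_mul_spatialPartial_eq_neg i hf (hg₁ i) hK (hgK₁ i) t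

/-- The Dirichlet energy `½ ∫ |∇y(t, x)|² dx` of the time slice `y(t, ·)`, whose growth measures
the cross term of `∂ₜy` and `Δy`. -/
noncomputable def dirichletEnergy (y : ℝ × (Fin d → ℝ) → ℝ) (t : ℝ) : ℝ :=
  ∫ x, (1 / 2) * ∑ i, spatialPartial i y t x ^ 2

lemma dirichletEnergy_nonneg (t : ℝ) : 0 ≤ dirichletEnergy y t :=
  integral_nonneg fun x => by positivity

lemma dirichletEnergy_eq_zero {t : ℝ} (hy : ∀ x, y (t, x) = 0) : dirichletEnergy y t = 0 := by
  simp [dirichletEnergy, spatialPartial, hy]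

lemma hasDerivAt_dirichletEnergy (hy : ContDiff ℝ 2 y) (hK : IsCompact K)
    (hyK : SpatiallySupportedIn K y) (t : ℝ) :
    HasDerivAt (dirichletEnergy y) (-∫ x, timeDeriv y t x * spatialLaplacian y t x) t := by
  have hy₁ i := contDiff_spatialPartial (m := 1) i hy (by norm_num)
  have hyt := contDiff_timeDeriv (m := 1) hy (by norm_num)
  have hderiv_integrand (s : ℝ) (x : Fin d → ℝ) :
      HasDerivAt (fun r => (1 / 2) * ∑ i, spatialPartial i y r x ^ 2)
        (∑ i, spatialPartial i (fun p => timeDeriv y p.1 p.2) s x * spatialPartial i y s x) s := by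
    have hderiv_sq (i : Fin d) := (hasDerivAt_timeDeriv (t := s) (x := x)
      ((hy₁ i).differentiable one_ne_zero _)).pow 2
    convert! (HasDerivAt.fun_sum fun i (_ : i ∈ Finset.univ) => hderiv_sq i).const_mul (1 / 2)
      using 1
    rw [Finset.mul_sum]
    refine Finset.sum_congr rfl fun i _ => ?_
    rw [timeDeriv_spatialPartial_comm i hy]
    ring
  rw [integral_mul_spatialLaplacian_eq_neg (f := fun p => timeDeriv y p.1 p.2) hyt hy hK hyK,
    neg_neg]
  refine hasDerivAt_integral_slice
    (f := fun p => (1 / 2) * ∑ i, spatialPartial i y p.1 p.2 ^ 2)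
    (f' := fun p => ∑ i, spatialPartial i (fun q => timeDeriv y q.1 q.2) p.1 p.2 *
      spatialPartial i y p.1 p.2)
    (continuous_const.mul (continuous_finsetSum _ fun i _ => (hy₁ i).continuous.pow 2))
    (continuous_finsetSum _ fun i _ => (continuous_spatialPartial i hyt).mul (hy₁ i).continuous)
    hderiv_integrand hK ?_ t
  intro s x hx
  simp [fun i => hyK.spatialPartial i hK.isClosed s x hx]

lemma integral_sq_timeDeriv_sub_mul_spatialLaplacian_eq (κ a b : ℝ) (hy : ContDiff ℝ 2 y)
    (hK : IsCompact K) (hyK : SpatiallySupportedIn K y) :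
    ∫ t in a..b, ∫ x, (timeDeriv y t x - κ * spatialLaplacian y t x) ^ 2 =
      (∫ t in a..b, ∫ x, (timeDeriv y t x ^ 2 + κ ^ 2 * spatialLaplacian y t x ^ 2)) +
        2 * κ * (dirichletEnergy y b - dirichletEnergy y a) := by
  have hT := (contDiff_timeDeriv (m := 1) hy (by norm_num)).continuous
  have hL := continuous_spatialLaplacian hy
  have hTK := hyK.timeDeriv
  have hLK := hyK.spatialLaplacian hK.isClosed
  have hcross : Continuous fun t => ∫ x, timeDeriv y t x * spatialLaplacian y t x :=
    continuous_integral_slice (hT.mul hL) hK fun t x hx => mul_eq_zero_of_left (hTK t x hx) _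
  have hsum : Continuous fun t =>
      ∫ x, (timeDeriv y t x ^ 2 + κ ^ 2 * spatialLaplacian y t x ^ 2) :=
    continuous_integral_slice ((hT.pow 2).add (continuous_const.mul (hL.pow 2))) hK
      fun t x hx => by simp [hTK t x hx, hLK t x hx]
  have hgrowth : -∫ t in a..b, ∫ x, timeDeriv y t x * spatialLaplacian y t x =
      dirichletEnergy y b - dirichletEnergy y a := by
    rw [← intervalIntegral.integral_neg]
    exact intervalIntegral.integral_eq_sub_of_hasDerivAt
      (fun t _ => hasDerivAt_dirichletEnergy hy hK hyK t) (hcross.neg.intervalIntegrable a b)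
  simp only [fun t => integral_sub_mul_sq_eq κ (memLp_slice (μ := volume) hT hK hTK 2 t)
    (memLp_slice hL hK hLK 2 t)]
  rw [intervalIntegral.integral_sub (hsum.intervalIntegrable a b)
      ((hcross.const_mul (2 * κ)).intervalIntegrable a b),
    intervalIntegral.integral_const_mul, ← hgrowth]
  ring

lemma half_integral_sq_timeDeriv_sub_mul_spatialLaplacian_le (κ : ℝ) {a b : ℝ} (hab : a ≤ b)
    (hy : ContDiff ℝ 2 y) (hK : IsCompact K) (hyK : SpatiallySupportedIn K y) :
    (1 / 2) * ∫ t in a..b, ∫ x, (timeDeriv y t x - κ * spatialLaplacian y t x) ^ 2 ≤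
      ∫ t in a..b, ∫ x, (timeDeriv y t x ^ 2 + κ ^ 2 * spatialLaplacian y t x ^ 2) := by
  have hT := (contDiff_timeDeriv (m := 1) hy (by norm_num)).continuous
  have hL := continuous_spatialLaplacian hy
  have hTK := hyK.timeDeriv
  have hLK := hyK.spatialLaplacian hK.isClosed
  rw [← intervalIntegral.integral_const_mul]
  refine intervalIntegral.integral_mono hab (Continuous.intervalIntegrable ?_ a b)
    (Continuous.intervalIntegrable ?_ a b) fun t =>
      half_integral_sub_mul_sq_le κ (memLp_slice hT hK hTK 2 t) (memLp_slice hL hK hLK 2 t)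
  · exact (continuous_integral_slice ((hT.sub (hL.const_mul κ)).pow 2) hK
      fun t x hx => by simp [hTK t x hx, hLK t x hx]).const_mul (1 / 2)
  · exact continuous_integral_slice ((hT.pow 2).add ((hL.pow 2).const_mul (κ ^ 2))) hK
      fun t x hx => by simp [hTK t x hx, hLK t x hx]

end Energy

theorem stmt1 {d : ℕ} (T κ : ℝ) (hT : 0 < T) (hκ : 0 < κ)
    (y : ℝ × (Fin d → ℝ) → ℝ) (hy : ContDiff ℝ 2 y)
    (K : Set (Fin d → ℝ)) (hK : IsCompact K)
    (hsupp : ∀ t x, x ∉ K → y (t, x) = 0)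
    (hinit : ∀ x, y (0, x) = 0) :
    (1/2) * (∫ t in Set.Ioc (0:ℝ) T, ∫ x : Fin d → ℝ,
        (timeDeriv y t x - κ * spatialLaplacian y t x) ^ 2) ≤
      (∫ t in Set.Ioc (0:ℝ) T, ∫ x : Fin d → ℝ,
        ((timeDeriv y t x) ^ 2 + κ ^ 2 * (spatialLaplacian y t x) ^ 2)) ∧
    (∫ t in Set.Ioc (0:ℝ) T, ∫ x : Fin d → ℝ,
        ((timeDeriv y t x) ^ 2 + κ ^ 2 * (spatialLaplacian y t x) ^ 2)) ≤
      ∫ t in Set.Ioc (0:ℝ) T, ∫ x : Fin d → ℝ,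
        (timeDeriv y t x - κ * spatialLaplacian y t x) ^ 2 := by
  have henergy := integral_sq_timeDeriv_sub_mul_spatialLaplacian_eq κ 0 T hy hK hsupp
  have hhalf := half_integral_sq_timeDeriv_sub_mul_spatialLaplacian_le κ hT.le hy hK hsupp
  rw [dirichletEnergy_eq_zero hinit, sub_zero] at henergy
  simp only [intervalIntegral.integral_of_le hT.le] at henergy hhalf
  have hgrowth : 0 ≤ 2 * κ * dirichletEnergy y T :=
    mul_nonneg (by positivity) (dirichletEnergy_nonneg T)
  exact ⟨hhalf, by linarith⟩
end

section
/- Let α > 0, let M be a real symmetric positive definite m × m matrix, M_q a real symmetric positive semidefinite n × n matrix, and L a real m × n matrix such that S := M_q + α L^T M^{-1} L is positive definite. Then the (n + 2m) × (n + 2m) block matrix A = [[M_q, 0, L^T], [0, αM, M], [L, M, 0]] is invertible. -/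
/-!
Eliminate the control and adjoint blocks: the trailing block `[[αM, M], [M, 0]]` is block
anti-triangular, hence invertible as soon as `M` is. Only the lower right block `-α M⁻¹` of its
inverse meets the zero pattern of the off-diagonal blocks, so the Schur complement of the whole
system is exactly `M_q + α Lᵀ M⁻¹ L`.
-/

open Matrix

theorem fromCols_zero_mul_mul_fromRows_zero {R k m₁ m₂ n₁ n₂ l : Type*}
    [Semiring R] [Fintype m₁] [Fintype m₂] [Fintype n₁] [Fintype n₂]
    (B : Matrix k m₂ R) (X : Matrix (m₁ ⊕ m₂) (n₁ ⊕ n₂) R) (C : Matrix n₂ l R) :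
    fromCols (0 : Matrix k m₁ R) B * X * fromRows (0 : Matrix n₁ l R) C =
      B * X.toBlocks₂₂ * C := by
  conv_lhs => rw [← fromBlocks_toBlocks X, fromCols_mul_fromBlocks, fromCols_mul_fromRows]
  simp only [Matrix.zero_mul, Matrix.mul_zero, zero_add]

section CommRing

variable {R m n : Type*} [CommRing R] [Fintype m] [DecidableEq m]

theorem fromBlocks_zero₂₂_mul_fromBlocks_zero₁₁_eq_one (D : Matrix m m R) {E F : Matrix m m R}
    (hE : IsUnit E.det) (hF : IsUnit F.det) :
    fromBlocks D E F 0 * fromBlocks 0 F⁻¹ E⁻¹ (-(E⁻¹ * D * F⁻¹)) = 1 := by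
  have cancel : D * F⁻¹ + E * -(E⁻¹ * D * F⁻¹) = 0 := by
    rw [Matrix.mul_neg, Matrix.mul_assoc E⁻¹, mul_nonsing_inv_cancel_left _ _ hE, add_neg_cancel]
  rw [fromBlocks_multiply, cancel, mul_nonsing_inv E hE, mul_nonsing_inv F hF]
  simp

theorem isUnit_fromBlocks_zero₂₂ (D : Matrix m m R) {E F : Matrix m m R}
    (hE : IsUnit E.det) (hF : IsUnit F.det) : IsUnit (fromBlocks D E F 0) :=
  .of_mul_eq_one _ (fromBlocks_zero₂₂_mul_fromBlocks_zero₁₁_eq_one D hE hF)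

theorem inv_fromBlocks_zero₂₂ (D : Matrix m m R) {E F : Matrix m m R}
    (hE : IsUnit E.det) (hF : IsUnit F.det) :
    (fromBlocks D E F 0)⁻¹ = fromBlocks 0 F⁻¹ E⁻¹ (-(E⁻¹ * D * F⁻¹)) :=
  inv_eq_right_inv (fromBlocks_zero₂₂_mul_fromBlocks_zero₁₁_eq_one D hE hF)

variable [Fintype n] [DecidableEq n]

theorem isUnit_fromBlocks_fromBlocks_zero₂₂_iff (P : Matrix n n R) (B : Matrix n m R)
    (C : Matrix m n R) (D : Matrix m m R) {E F : Matrix m m R}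
    (hE : IsUnit E.det) (hF : IsUnit F.det) :
    IsUnit (fromBlocks P (fromCols 0 B) (fromRows 0 C) (fromBlocks D E F 0)) ↔
      IsUnit (P + B * (E⁻¹ * D * F⁻¹) * C) := by
  let := (isUnit_fromBlocks_zero₂₂ D hE hF).invertible
  rw [isUnit_fromBlocks_iff_of_invertible₂₂, invOf_eq_nonsing_inv,
    fromCols_zero_mul_mul_fromRows_zero, inv_fromBlocks_zero₂₂ D hE hF, toBlocks_fromBlocks₂₂,
    Matrix.mul_neg, Matrix.neg_mul, sub_neg_eq_add]

theorem stmt9_general (α : R) {M : Matrix m m R} (hM : IsUnit M.det) (P : Matrix n n R)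
    (B : Matrix n m R) (C : Matrix m n R) :
    IsUnit (fromBlocks P (fromCols 0 B) (fromRows 0 C) (fromBlocks (α • M) M M 0)).det ↔
      IsUnit (P + α • (B * M⁻¹ * C)).det := by
  have schur : B * (M⁻¹ * (α • M) * M⁻¹) * C = α • (B * M⁻¹ * C) := by
    simp only [Matrix.mul_smul, Matrix.smul_mul, nonsing_inv_mul M hM, Matrix.one_mul]
  rw [← isUnit_iff_isUnit_det, ← isUnit_iff_isUnit_det,
    isUnit_fromBlocks_fromBlocks_zero₂₂_iff P B C (α • M) hM hM, schur]

end CommRing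

theorem stmt9 {n m : ℕ} (α : ℝ) (hα : 0 < α)
    (M : Matrix (Fin m) (Fin m) ℝ) (hM : M.PosDef)
    (Mq : Matrix (Fin n) (Fin n) ℝ) (hMq : Mq.PosSemidef)
    (L : Matrix (Fin m) (Fin n) ℝ)
    (hS : (Mq + α • (Lᵀ * M⁻¹ * L)).PosDef) :
    IsUnit (Matrix.fromBlocks Mq (Matrix.fromCols 0 Lᵀ)
      (Matrix.fromRows 0 L) (Matrix.fromBlocks (α • M) M M 0)).det :=
  (stmt9_general α hM.det_pos.ne'.isUnit Mq Lᵀ L).mpr hS.det_pos.ne'.isUnit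
end

section
/- Let α > 0, let M be a real symmetric positive definite m × m matrix, M_q a real symmetric positive semidefinite n × n matrix, and L a real m × n matrix such that S := M_q + α L^T M^{-1} L is positive definite. Define the block matrices A = [[M_q, L^T], [L, −(1/α)M]] and B = [[S, 0], [0, (1/α)M]], both of size (n + m). Then every real generalized eigenvalue μ of the pencil (A, B), i.e., every μ ∈ ℝ for which there exists v ≠ 0 with A v = μ B v, satisfies (√5 − 1)/2 ≤ |μ| ≤ (√5 + 1)/2. In particular the condition number of B^{-1}A is at most cos(π/5)/sin(π/10) = (3 + √5)/2 ≈ 2.62. -/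
open Matrix

/-!
Eliminating the second block of an eigenvector `(x, y)` with eigenvalue `μ` leaves the quadratic
eigenvalue problem `μ² S x + μ K x = S x`, where `K = Lᴴ C⁻¹ L` and `S = E + K`; if `x = 0`, then
`μ = -1`. Pairing with `x` gives `μ² + t μ = 1`, where the Rayleigh quotient `t` of the pencil
`(K, S)` lies in `[0, 1]` because `0 ≤ K ≤ S`. By the triangle inequality
`‖μ‖² ≤ 1 + ‖μ‖` and `1 ≤ ‖μ‖² + ‖μ‖`, so `‖μ‖` lies between `1 / φ` and `φ`.
-/

section GoldenRatio

open scoped goldenRatio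

theorem le_goldenRatio_of_sq_le_add_one {r : ℝ} (h : r ^ 2 ≤ r + 1) : r ≤ φ := by
  have hfactor : (r - φ) * (r - ψ) ≤ 0 := by
    linear_combination h - r * Real.goldenRatio_add_goldenConj + Real.goldenRatio_mul_goldenConj
  by_contra! hr
  have hψ : ψ < r := Real.goldenConj_neg.trans (Real.goldenRatio_pos.trans hr)
  exact hfactor.not_gt (mul_pos (sub_pos.2 hr) (sub_pos.2 hψ))

theorem neg_goldenConj_le_of_one_le_sq_add {r : ℝ} (hr : 0 ≤ r) (h : 1 ≤ r ^ 2 + r) : -ψ ≤ r := by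
  have hfactor : 0 ≤ (r + ψ) * (r + φ) := by
    linear_combination h - r * Real.goldenRatio_add_goldenConj - Real.goldenRatio_mul_goldenConj
  have hpos : 0 < r + φ := add_pos_of_nonneg_of_pos hr Real.goldenRatio_pos
  exact neg_le_iff_add_nonneg.2 (nonneg_of_mul_nonneg_left hfactor hpos)

variable {𝕜 : Type*} [NormedDivisionRing 𝕜] {t μ : 𝕜}

theorem norm_le_goldenRatio (ht : ‖t‖ ≤ 1) (h : μ ^ 2 + t * μ = 1) : ‖μ‖ ≤ φ := by
  apply le_goldenRatio_of_sq_le_add_one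
  calc ‖μ‖ ^ 2 = ‖1 - t * μ‖ := by rw [← norm_pow, eq_sub_of_add_eq h]
    _ ≤ ‖(1 : 𝕜)‖ + ‖t * μ‖ := norm_sub_le _ _
    _ = ‖t‖ * ‖μ‖ + 1 := by rw [norm_one, norm_mul, add_comm]
    _ ≤ ‖μ‖ + 1 := by gcongr; exact mul_le_of_le_one_left (norm_nonneg μ) ht

theorem neg_goldenConj_le_norm (ht : ‖t‖ ≤ 1) (h : μ ^ 2 + t * μ = 1) : -ψ ≤ ‖μ‖ := by
  apply neg_goldenConj_le_of_one_le_sq_add (norm_nonneg μ)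
  calc 1 = ‖μ ^ 2 + t * μ‖ := by rw [h, norm_one]
    _ ≤ ‖μ ^ 2‖ + ‖t * μ‖ := norm_add_le _ _
    _ = ‖μ‖ ^ 2 + ‖t‖ * ‖μ‖ := by rw [norm_pow, norm_mul]
    _ ≤ ‖μ‖ ^ 2 + ‖μ‖ := by gcongr; exact mul_le_of_le_one_left (norm_nonneg μ) ht

theorem goldenRatio_sq_eq : φ ^ 2 = (3 + √5) / 2 := by
  rw [Real.goldenRatio_sq]
  ring

theorem cos_pi_div_five_eq_goldenRatio_div_two : Real.cos (Real.pi / 5) = φ / 2 := by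
  rw [Real.cos_pi_div_five]
  ring

theorem sin_pi_div_ten_eq_neg_goldenConj_div_two : Real.sin (Real.pi / 10) = -ψ / 2 := by
  calc Real.sin (Real.pi / 10) = Real.cos (2 * (Real.pi / 5)) := by
        rw [← Real.cos_pi_div_two_sub]; ring_nf
    _ = 2 * (φ / 2) ^ 2 - 1 := by rw [Real.cos_two_mul, cos_pi_div_five_eq_goldenRatio_div_two]
    _ = -ψ / 2 := by
        linear_combination Real.goldenRatio_sq / 2 + Real.goldenRatio_add_goldenConj / 2

theorem cos_pi_div_five_div_sin_pi_div_ten :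
    Real.cos (Real.pi / 5) / Real.sin (Real.pi / 10) = φ ^ 2 := by
  rw [cos_pi_div_five_eq_goldenRatio_div_two, sin_pi_div_ten_eq_neg_goldenConj_div_two,
    div_div_div_cancel_right₀ two_ne_zero, ← Real.inv_goldenRatio, div_inv_eq_mul, sq]

end GoldenRatio

/-- `μ` is a generalized eigenvalue of the pencil `(A, B)`: `A v = μ B v` for some `v ≠ 0`. No
regularity of the pencil is assumed. -/
def IsGeneralizedEigenvalue {R ι : Type*} [Semiring R] [Fintype ι] (A B : Matrix ι ι R) (μ : R) :
    Prop :=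
  ∃ v : ι → R, v ≠ 0 ∧ A *ᵥ v = μ • (B *ᵥ v)

section SchurReduction

variable {R m n : Type*} [CommRing R] (E : Matrix n n R) (F : Matrix n m R) (L : Matrix m n R)
  (C : Matrix m m R)

/-- The generalized saddle point matrix with blocks `E`, `F`, `L` and `-C`; the reduced KKT matrix
is the case `E = M_q`, `F = Lᵀ`, `C = α⁻¹ M`. -/
def saddlePointMatrix : Matrix (n ⊕ m) (n ⊕ m) R :=
  fromBlocks E F L (-C)

variable [Fintype m] [DecidableEq m]

/-- The Schur complement of the block `-C` in `saddlePointMatrix E F L C`. If `det C` is not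
a unit, then `C⁻¹ = 0` and this is just `E`. -/
noncomputable def schurComplement : Matrix n n R :=
  E + F * C⁻¹ * L

/-- The exact Schur complement block-diagonal preconditioner of `saddlePointMatrix E F L C`. -/
noncomputable def schurPreconditioner : Matrix (n ⊕ m) (n ⊕ m) R :=
  fromBlocks (schurComplement E F L C) 0 0 C

theorem schurComplement_one_div_smul {K : Type*} [Field K] {α : K} (hα : α ≠ 0)
    (E : Matrix n n K) (F : Matrix n m K) (L : Matrix m n K) {M : Matrix m m K}
    (hM : IsUnit M.det) :
    schurComplement E F L ((1 / α) • M) = E + α • (F * M⁻¹ * L) := by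
  have hinv : ((1 / α) • M)⁻¹ = α • M⁻¹ := by
    simpa [Units.smul_def] using Matrix.inv_smul' M (Units.mk0 α hα)⁻¹ hM
  rw [schurComplement, hinv, Matrix.mul_smul, Matrix.smul_mul]

variable {E F L C} [Fintype n] {μ : R}

theorem saddlePointMatrix_mulVec_eq_smul_iff {x : n → R} {y : m → R} :
    saddlePointMatrix E F L C *ᵥ Sum.elim x y =
        μ • (schurPreconditioner E F L C *ᵥ Sum.elim x y) ↔
      E *ᵥ x + F *ᵥ y = μ • (schurComplement E F L C *ᵥ x) ∧ L *ᵥ x = (1 + μ) • (C *ᵥ y) := by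
  have hsmul (a : n → R) (b : m → R) : μ • Sum.elim a b = Sum.elim (μ • a) (μ • b) :=
    Sum.comp_elim (μ • ·) a b
  rw [saddlePointMatrix, schurPreconditioner, fromBlocks_mulVec, fromBlocks_mulVec]
  simp only [Sum.elim_comp_inl, Sum.elim_comp_inr, zero_mulVec, add_zero, zero_add, neg_mulVec,
    hsmul, Sum.elim_eq_iff, add_smul, one_smul, ← sub_eq_add_neg, sub_eq_iff_eq_add']

theorem sq_smul_schurComplement_add_smul_eq (hC : IsUnit C.det) {x : n → R} {y : m → R}
    (h₁ : E *ᵥ x + F *ᵥ y = μ • (schurComplement E F L C *ᵥ x))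
    (h₂ : L *ᵥ x = (1 + μ) • (C *ᵥ y)) :
    μ ^ 2 • (schurComplement E F L C *ᵥ x) + μ • ((F * C⁻¹ * L) *ᵥ x) =
      schurComplement E F L C *ᵥ x := by
  have hK : (F * C⁻¹ * L) *ᵥ x = (1 + μ) • (F *ᵥ y) := by
    rw [← mulVec_mulVec, h₂, mulVec_smul, mulVec_mulVec, Matrix.mul_assoc,
      nonsing_inv_mul _ hC, Matrix.mul_one]
  have hS : schurComplement E F L C *ᵥ x = E *ᵥ x + (F * C⁻¹ * L) *ᵥ x := add_mulVec _ _ _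
  linear_combination (norm := module) -(1 + μ) • h₁ - hK - (1 + μ) • hS

theorem IsGeneralizedEigenvalue.eq_neg_one_or_exists_sq_smul_add_smul_eq [IsDomain R]
    (hC : IsUnit C.det)
    (h : IsGeneralizedEigenvalue (saddlePointMatrix E F L C) (schurPreconditioner E F L C) μ) :
    μ = -1 ∨ ∃ x : n → R, x ≠ 0 ∧
      μ ^ 2 • (schurComplement E F L C *ᵥ x) + μ • ((F * C⁻¹ * L) *ᵥ x) =
        schurComplement E F L C *ᵥ x := by
  obtain ⟨v, hv, hAv⟩ := h
  obtain ⟨x, y, rfl⟩ : ∃ x y, v = Sum.elim x y := ⟨_, _, (Sum.elim_comp_inl_inr v).symm⟩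
  obtain ⟨h₁, h₂⟩ := saddlePointMatrix_mulVec_eq_smul_iff.1 hAv
  rcases ne_or_eq x 0 with hx | rfl
  · exact .inr ⟨x, hx, sq_smul_schurComplement_add_smul_eq hC h₁ h₂⟩
  · left
    have hy : y ≠ 0 := by
      rintro rfl
      exact hv Sum.elim_zero_zero
    have hinj : Function.Injective C.mulVec :=
      mulVec_injective_of_isUnit ((isUnit_iff_isUnit_det C).2 hC)
    have hCy : C *ᵥ y ≠ 0 := fun h₀ ↦ hy (hinj (h₀.trans (mulVec_zero C).symm))
    rw [mulVec_zero, eq_comm, smul_eq_zero_iff_left hCy] at h₂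
    exact eq_neg_of_add_eq_zero_right h₂

end SchurReduction

section Hermitian

open scoped ComplexOrder goldenRatio

variable {𝕜 m n : Type*} [RCLike 𝕜] [Fintype m] [DecidableEq m] [Fintype n]

theorem norm_dotProduct_mulVec_le_of_posSemidef {E K : Matrix n n 𝕜} (hE : E.PosSemidef)
    (hK : K.PosSemidef) (x : n → 𝕜) :
    ‖star x ⬝ᵥ (K *ᵥ x)‖ ≤ ‖star x ⬝ᵥ ((E + K) *ᵥ x)‖ := by
  have hEx := hE.dotProduct_mulVec_nonneg x
  have hKx := hK.dotProduct_mulVec_nonneg x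
  rw [add_mulVec, dotProduct_add, ← RCLike.ofReal_le_ofReal (K := 𝕜), RCLike.norm_of_nonneg' hKx,
    RCLike.norm_of_nonneg' (add_nonneg hEx hKx)]
  exact le_add_of_nonneg_left hEx

variable {E : Matrix n n 𝕜} {L : Matrix m n 𝕜} {C : Matrix m m 𝕜}

theorem IsGeneralizedEigenvalue.exists_sq_add_mul_eq_one {μ : 𝕜}
    (hE : E.PosSemidef) (hC : C.PosDef) (hS : (schurComplement E Lᴴ L C).PosDef)
    (h : IsGeneralizedEigenvalue (saddlePointMatrix E Lᴴ L C) (schurPreconditioner E Lᴴ L C) μ) :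
    ∃ t : 𝕜, ‖t‖ ≤ 1 ∧ μ ^ 2 + t * μ = 1 := by
  have hCdet : IsUnit C.det := (isUnit_iff_isUnit_det C).1 hC.isUnit
  obtain rfl | ⟨x, hx, hquad⟩ := h.eq_neg_one_or_exists_sq_smul_add_smul_eq hCdet
  · exact ⟨0, by simp, by simp⟩
  have hK : (Lᴴ * C⁻¹ * L).PosSemidef := hC.inv.posSemidef.conjTranspose_mul_mul_same L
  have hSx : star x ⬝ᵥ (schurComplement E Lᴴ L C *ᵥ x) ≠ 0 := (hS.dotProduct_mulVec_pos hx).ne'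
  let t : 𝕜 := (star x ⬝ᵥ ((Lᴴ * C⁻¹ * L) *ᵥ x)) / (star x ⬝ᵥ (schurComplement E Lᴴ L C *ᵥ x))
  refine ⟨t, ?_, ?_⟩
  · rw [norm_div]
    exact div_le_one_of_le₀ (norm_dotProduct_mulVec_le_of_posSemidef hE hK x) (norm_nonneg _)
  · have hpair := congrArg (star x ⬝ᵥ ·) hquad
    simp only [dotProduct_add, dotProduct_smul, smul_eq_mul] at hpair
    simp only [t]
    field_simp
    linear_combination hpair

theorem stmt11_general (hE : E.PosSemidef) (hC : C.PosDef)
    (hS : (schurComplement E Lᴴ L C).PosDef) :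
    (∀ μ : 𝕜,
      IsGeneralizedEigenvalue (saddlePointMatrix E Lᴴ L C) (schurPreconditioner E Lᴴ L C) μ →
        (√5 - 1) / 2 ≤ ‖μ‖ ∧ ‖μ‖ ≤ (√5 + 1) / 2) ∧
    (∀ μ₁ μ₂ : 𝕜,
      IsGeneralizedEigenvalue (saddlePointMatrix E Lᴴ L C) (schurPreconditioner E Lᴴ L C) μ₁ →
      IsGeneralizedEigenvalue (saddlePointMatrix E Lᴴ L C) (schurPreconditioner E Lᴴ L C) μ₂ →
        ‖μ₁‖ ≤ Real.cos (Real.pi / 5) / Real.sin (Real.pi / 10) * ‖μ₂‖) := by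
  have hbounds (μ : 𝕜) (h : IsGeneralizedEigenvalue (saddlePointMatrix E Lᴴ L C)
      (schurPreconditioner E Lᴴ L C) μ) : -ψ ≤ ‖μ‖ ∧ ‖μ‖ ≤ φ := by
    obtain ⟨t, ht, hμ⟩ := h.exists_sq_add_mul_eq_one hE hC hS
    exact ⟨neg_goldenConj_le_norm ht hμ, norm_le_goldenRatio ht hμ⟩
  constructor
  · intro μ h
    rw [← neg_sub, neg_div, add_comm]
    exact hbounds μ h
  · intro μ₁ μ₂ h₁ h₂
    calc ‖μ₁‖ ≤ φ := (hbounds μ₁ h₁).2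
      _ = φ ^ 2 * -ψ := by linear_combination φ * Real.goldenRatio_mul_goldenConj
      _ ≤ φ ^ 2 * ‖μ₂‖ := by gcongr; exact (hbounds μ₂ h₂).1
      _ = _ := by rw [cos_pi_div_five_div_sin_pi_div_ten]

end Hermitian

theorem stmt11 {n m : ℕ} (α : ℝ) (hα : 0 < α)
    (M : Matrix (Fin m) (Fin m) ℝ) (hM : M.PosDef)
    (Mq : Matrix (Fin n) (Fin n) ℝ) (hMq : Mq.PosSemidef)
    (L : Matrix (Fin m) (Fin n) ℝ)
    (hS : (Mq + α • (Lᵀ * M⁻¹ * L)).PosDef) :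
    (∀ μ : ℝ,
      (∃ v : (Fin n ⊕ Fin m) → ℝ, v ≠ 0 ∧
          (Matrix.fromBlocks Mq Lᵀ L (-(1/α) • M)) *ᵥ v =
            μ • ((Matrix.fromBlocks (Mq + α • (Lᵀ * M⁻¹ * L)) 0 0 ((1/α) • M)) *ᵥ v)) →
        (Real.sqrt 5 - 1) / 2 ≤ |μ| ∧ |μ| ≤ (Real.sqrt 5 + 1) / 2) ∧
    (∀ μ₁ μ₂ : ℝ,
      (∃ v : (Fin n ⊕ Fin m) → ℝ, v ≠ 0 ∧
          (Matrix.fromBlocks Mq Lᵀ L (-(1/α) • M)) *ᵥ v =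
            μ₁ • ((Matrix.fromBlocks (Mq + α • (Lᵀ * M⁻¹ * L)) 0 0 ((1/α) • M)) *ᵥ v)) →
      (∃ v : (Fin n ⊕ Fin m) → ℝ, v ≠ 0 ∧
          (Matrix.fromBlocks Mq Lᵀ L (-(1/α) • M)) *ᵥ v =
            μ₂ • ((Matrix.fromBlocks (Mq + α • (Lᵀ * M⁻¹ * L)) 0 0 ((1/α) • M)) *ᵥ v)) →
        |μ₁| ≤ (Real.cos (Real.pi / 5) / Real.sin (Real.pi / 10)) * |μ₂|) ∧
    Real.cos (Real.pi / 5) / Real.sin (Real.pi / 10) = (3 + Real.sqrt 5) / 2 := by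
  rw [← schurComplement_one_div_smul hα.ne' Mq Lᵀ L hM.det_pos.ne'.isUnit] at hS ⊢
  rw [neg_smul]
  obtain ⟨hbounds, hcond⟩ := stmt11_general hMq (hM.smul (one_div_pos.2 hα)) hS
  exact ⟨hbounds, hcond, cos_pi_div_five_div_sin_pi_div_ten.trans goldenRatio_sq_eq⟩
end
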